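/- For all FNM guarded processes p, q and every input action a ∈ L, the following laws of strong prefixing hold up to structure-preserving bisimilarity: a̲.(p + q) ~sp a̲.p + a̲.q (distribution); a̲.τ.p ~sp a.p (absorption); and if p ~sp 0 + 0 or p = 0, then a̲.p ~sp 0 + 0 (annihilation). -/

import Mathlib

/-- Actions of FNM: the invisible action τ, input actions `a ∈ L` and
output actions `ā ∈ L̄` (here `α` plays the role of the finite set `L`). -/
inductive Act (α : Type) where
  | tau : Act α
  | inp : α → Act α
  | out : α → Act α
  deriving DecidableEq

/-- (Open) FNM terms: `0`, the variable `x`, action prefixing `mu.t`, strong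
prefixing `a̲.s`, choice `s+s`, constants `C`, parallel `t|t` and
restriction `(νa)p`.  The syntactic categories are carved out below. -/
inductive FNM (α κ : Type) where
  | nil : FNM α κ
  | var : FNM α κ
  | pref : Act α → FNM α κ → FNM α κ
  | spref : α → FNM α κ → FNM α κ
  | sum : FNM α κ → FNM α κ → FNM α κ
  | const : κ → FNM α κ
  | par : FNM α κ → FNM α κ → FNM α κ
  | res : α → FNM α κ → FNM α κ
  deriving DecidableEq

namespace FNM

variable {α κ : Type}

mutual
  /-- Guarded terms: syntactic category `s ::= 0 | mu.t | a̲.s | s+s`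
  (with `t` restriction-free). -/
  def Grd : FNM α κ → Prop
    | .nil => True
    | .var => False
    | .pref _ t => RF t
    | .spref _ s => Grd s
    | .sum s1 s2 => Grd s1 ∧ Grd s2
    | .const _ => False
    | .par _ _ => False
    | .res _ _ => False
  /-- Restriction-free terms: syntactic category `t ::= q | t|t`, where
  `q ::= s | C | x` is the category of sequential terms. -/
  def RF : FNM α κ → Prop
    | .nil => True
    | .var => True
    | .pref _ t => RF t
    | .spref _ s => Grd s
    | .sum s1 s2 => Grd s1 ∧ Grd s2
    | .const _ => True
    | .par t1 t2 => RF t1 ∧ RF t2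
    | .res _ _ => False
end

/-- Sequential terms: `q ::= s | C | x`. -/
def Seq (t : FNM α κ) : Prop :=
  Grd t ∨ (∃ c, t = FNM.const c) ∨ t = FNM.var

/-- General terms: `p ::= t | (νa)p`. -/
def Gen : FNM α κ → Prop
  | .res _ p => Gen p
  | t => RF t

/-- Closed terms: no occurrence of the variable. -/
def VarFree : FNM α κ → Prop
  | .nil => True
  | .var => False
  | .pref _ t => VarFree t
  | .spref _ s => VarFree s
  | .sum s1 s2 => VarFree s1 ∧ VarFree s2
  | .const _ => True
  | .par t1 t2 => VarFree t1 ∧ VarFree t2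
  | .res _ p => VarFree p

/-- Substitution `p{r/x}` of the term `r` for every occurrence of the
variable `x` in `p` (constants are dealt with via the environment). -/
def subst (r : FNM α κ) : FNM α κ → FNM α κ
  | .nil => .nil
  | .var => r
  | .pref mu t => .pref mu (subst r t)
  | .spref a s => .spref a (subst r s)
  | .sum s1 s2 => .sum (subst r s1) (subst r s2)
  | .const c => .const c
  | .par t1 t2 => .par (subst r t1) (subst r t2)
  | .res a p => .res a (subst r p)

/-- `mu` uses the name `a`. -/
def _root_.Act.uses (a : α) : Act α → Prop
  | .tau => False
  | .inp b => b = a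
  | .out b => b = a

/-- `a` occurs free in a term (through an environment `env` giving the body
of each process constant). -/
inductive FreeIn (env : κ → FNM α κ) (a : α) : FNM α κ → Prop where
  | pref_act {mu : Act α} {t : FNM α κ} : mu.uses a → FreeIn env a (.pref mu t)
  | pref_cont {mu : Act α} {t : FNM α κ} : FreeIn env a t → FreeIn env a (.pref mu t)
  | spref_act {s : FNM α κ} : FreeIn env a (.spref a s)
  | spref_cont {b : α} {s : FNM α κ} : FreeIn env a s → FreeIn env a (.spref b s)
  | sum_l {s1 s2 : FNM α κ} : FreeIn env a s1 → FreeIn env a (.sum s1 s2)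
  | sum_r {s1 s2 : FNM α κ} : FreeIn env a s2 → FreeIn env a (.sum s1 s2)
  | par_l {t1 t2 : FNM α κ} : FreeIn env a t1 → FreeIn env a (.par t1 t2)
  | par_r {t1 t2 : FNM α κ} : FreeIn env a t2 → FreeIn env a (.par t1 t2)
  | res {b : α} {p : FNM α κ} : a ≠ b → FreeIn env a p → FreeIn env a (.res b p)
  | const {c : κ} : FreeIn env a (env c) → FreeIn env a (.const c)

/-- `a` occurs bound (by a restriction) in a term. -/
inductive BoundIn (env : κ → FNM α κ) (a : α) : FNM α κ → Prop where
  | res_here {p : FNM α κ} : BoundIn env a (.res a p)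
  | res_in {b : α} {p : FNM α κ} : BoundIn env a p → BoundIn env a (.res b p)
  | pref {mu : Act α} {t : FNM α κ} : BoundIn env a t → BoundIn env a (.pref mu t)
  | spref {b : α} {s : FNM α κ} : BoundIn env a s → BoundIn env a (.spref b s)
  | sum_l {s1 s2 : FNM α κ} : BoundIn env a s1 → BoundIn env a (.sum s1 s2)
  | sum_r {s1 s2 : FNM α κ} : BoundIn env a s2 → BoundIn env a (.sum s1 s2)
  | par_l {t1 t2 : FNM α κ} : BoundIn env a t1 → BoundIn env a (.par t1 t2)
  | par_r {t1 t2 : FNM α κ} : BoundIn env a t2 → BoundIn env a (.par t1 t2)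
  | const {c : κ} : BoundIn env a (env c) → BoundIn env a (.const c)

end FNM

/-- A place of the net `N_FNM`: a sequential (extended) term, rendered as a
pure sequential term together with the record `ρ : α → Bool` of which names
have been replaced by their restricted counterparts (`ρ a = true` represents
the substitution `{a'/a}`). -/
abbrev Place (α κ : Type) := FNM α κ × (α → Bool)

namespace FNM

variable {α κ : Type} [DecidableEq α] [DecidableEq κ] [Fintype α]

/-- The decomposition function `dec`, mapping (extended) terms to markings:
`dec(0) = θ`, `dec(p|q) = dec(p) ⊕ dec(q)`, `dec((νa)p) = dec(p){a'/a}`, and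
a sequential term other than `0` is mapped to a single place. -/
def dec (ρ : α → Bool) : FNM α κ → Multiset (Place α κ)
  | .nil => 0
  | .par t1 t2 => dec ρ t1 + dec ρ t2
  | .res a p => dec (Function.update ρ a true) p
  | t => {(t, ρ)}

end FNM

/-- Extended visible actions: inputs and outputs, possibly restricted
(`inp a true` represents `a'`, `out a false` represents `ā`, etc.). -/
inductive XAct (α : Type) where
  | inp : α → Bool → XAct α
  | out : α → Bool → XAct α

/-- Labels of net transitions: `τ` is the empty sequence, and otherwise a
sequence of extended actions. -/
abbrev Lbl (α : Type) := List (XAct α)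

/-- An extended action carries no restricted name. -/
def XAct.unres {α : Type} : XAct α → Prop
  | .inp _ r => r = false
  | .out _ r => r = false

/-- The label contributed by prefix `mu` under the restriction record `ρ`. -/
def actL {α : Type} (ρ : α → Bool) : Act α → Lbl α
  | .tau => []
  | .inp a => [XAct.inp a (ρ a)]
  | .out a => [XAct.out a (ρ a)]

/-- The synchronization relation `Sync(σ1, σ2, σ)`: `Sync(α, ᾱ, τ)`,
`Sync(aσ, ā, σ)` and `Sync(ā, aσ, σ)` for `σ ≠ ε` (also on restricted
actions). -/
inductive Sync {α : Type} : Lbl α → Lbl α → Lbl α → Prop where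
  | inout (a : α) (r : Bool) : Sync [XAct.inp a r] [XAct.out a r] []
  | outin (a : α) (r : Bool) : Sync [XAct.out a r] [XAct.inp a r] []
  | seqL (a : α) (r : Bool) (σ : Lbl α) :
      σ ≠ [] → Sync (XAct.inp a r :: σ) [XAct.out a r] σ
  | seqR (a : α) (r : Bool) (σ : Lbl α) :
      σ ≠ [] → Sync [XAct.out a r] (XAct.inp a r :: σ) σ

namespace FNM

variable {α κ : Type} [DecidableEq α] [DecidableEq κ] [Fintype α]

/-- A marking is admissible if for no name `a` both `a` and its restricted
counterpart `a'` occur free in it. -/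
def Adm (env : κ → FNM α κ) (m : Multiset (Place α κ)) : Prop :=
  ∀ a : α, ¬ ((∃ p ∈ m, FreeIn env a p.1 ∧ p.2 a = false) ∧
              (∃ p ∈ m, FreeIn env a p.1 ∧ p.2 a = true))

/-- The net transitions of `N_FNM`, generated by the rules (pref), (sum₁),
(sum₂), (cons), (s-pref) and (s-com). -/
inductive Tr (env : κ → FNM α κ) :
    Multiset (Place α κ) → Lbl α → Multiset (Place α κ) → Prop where
  | pref (ρ : α → Bool) (mu : Act α) (t : FNM α κ) :
      Tr env {(FNM.pref mu t, ρ)} (actL ρ mu) (dec ρ t)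
  | sum1 (ρ : α → Bool) (s1 s2 : FNM α κ) (σ : Lbl α) (m : Multiset (Place α κ)) :
      Tr env (dec ρ s1) σ m → Tr env {(FNM.sum s1 s2, ρ)} σ m
  | sum2 (ρ : α → Bool) (s1 s2 : FNM α κ) (σ : Lbl α) (m : Multiset (Place α κ)) :
      Tr env (dec ρ s2) σ m → Tr env {(FNM.sum s1 s2, ρ)} σ m
  | cons (ρ : α → Bool) (c : κ) (σ : Lbl α) (m : Multiset (Place α κ)) :
      Tr env (dec ρ (env c)) σ m → Tr env {(FNM.const c, ρ)} σ m
  | spref (ρ : α → Bool) (a : α) (s : FNM α κ) (σ : Lbl α) (m : Multiset (Place α κ)) :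
      Tr env (dec ρ s) σ m →
      Tr env {(FNM.spref a s, ρ)} (XAct.inp a (ρ a) :: σ) m
  | scom (m1 m2 m1' m2' : Multiset (Place α κ)) (σ1 σ2 σ : Lbl α) :
      Tr env m1 σ1 m1' → Tr env m2 σ2 m2' →
      Adm env (m1 + m2) → Sync σ1 σ2 σ →
      Tr env (m1 + m2) σ (m1' + m2')

/-- Tritions of the net `N_FNM`: only those whose label contains no
restricted action are kept. -/
def NetTr (env : κ → FNM α κ) (m : Multiset (Place α κ)) (σ : Lbl α)
    (m' : Multiset (Place α κ)) : Prop :=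
  Tr env m σ m' ∧ ∀ x ∈ σ, x.unres

/-- First projection of a linking. -/
def pi1 (l : Multiset (Place α κ × Place α κ)) : Multiset (Place α κ) :=
  l.map Prod.fst

/-- Second projection of a linking. -/
def pi2 (l : Multiset (Place α κ × Place α κ)) : Multiset (Place α κ) :=
  l.map Prod.snd

/-- Structure-preserving bisimulation on the net `N_FNM`. -/
def IsSPB (env : κ → FNM α κ) (R : Set (Multiset (Place α κ × Place α κ))) : Prop :=
  ∀ l ∈ R, ∀ c ≤ l,
    (∀ σ m1, NetTr env (pi1 c) σ m1 →
      ∃ m2 cb, NetTr env (pi2 c) σ m2 ∧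
        pi1 cb = m1 ∧ pi2 cb = m2 ∧ l - c + cb ∈ R) ∧
    (∀ σ m2, NetTr env (pi2 c) σ m2 →
      ∃ m1 cb, NetTr env (pi1 c) σ m1 ∧
        pi1 cb = m1 ∧ pi2 cb = m2 ∧ l - c + cb ∈ R)

/-- `p ~sp q`: some structure-preserving bisimulation contains a linking
projecting on `dec(p)` and `dec(q)`. -/
def SPEq (env : κ → FNM α κ) (p q : FNM α κ) : Prop :=
  ∃ R, IsSPB env R ∧ ∃ l ∈ R,
    pi1 l = dec (fun _ => false) p ∧ pi2 l = dec (fun _ => false) q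

end FNM

/-!
A transition whose preset is a single place comes from one of the rules for the outermost operator
of that place, because a synchronization consumes at least two tokens. Inverting these rules shows
that the two sides of each law are single places with exactly the same transitions. Such places are
related by a structure-preserving bisimulation consisting of the linking of the two places and of
all linkings of equal places: after the first step both nets carry the same marking.
-/

namespace FNM

section Transitions

variable {α κ : Type} [DecidableEq α] {env : κ → FNM α κ} {m m' : Multiset (Place α κ)}
  {σ : Lbl α} {ρ : α → Bool} {a : α} {mu : Act α} {p q : FNM α κ}

theorem Tr.card_pos (h : Tr env m σ m') : 0 < m.card := by
  induction h with
  | scom _ _ _ _ _ _ _ _ _ _ _ ih _ =>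
    rw [Multiset.card_add]
    exact Nat.add_pos_left ih _
  | _ => exact Nat.one_pos

theorem not_tr_zero : ¬ Tr env 0 σ m := fun h => h.card_pos.ne rfl

/-- The transitions of a single place, as prescribed by the outermost operator of its term: the
rule (s-com) is absent. -/
def PlaceTr (env : κ → FNM α κ) (ρ : α → Bool) :
    FNM α κ → Lbl α → Multiset (Place α κ) → Prop
  | .pref mu t, σ, m => σ = actL ρ mu ∧ m = dec ρ t
  | .spref a s, σ, m => ∃ σ', σ = XAct.inp a (ρ a) :: σ' ∧ Tr env (dec ρ s) σ' m
  | .sum s1 s2, σ, m => Tr env (dec ρ s1) σ m ∨ Tr env (dec ρ s2) σ m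
  | .const c, σ, m => Tr env (dec ρ (env c)) σ m
  | _, _, _ => False

theorem Tr.placeTr (h : Tr env {(p, ρ)} σ m) : PlaceTr env ρ p σ m := by
  generalize hM : ({(p, ρ)} : Multiset (Place α κ)) = M at h
  cases h with
  | scom m1 m2 _ _ _ _ _ h1 h2 =>
    have hcard := congrArg Multiset.card hM
    rw [Multiset.card_singleton, Multiset.card_add] at hcard
    have := h1.card_pos
    have := h2.card_pos
    omega
  | _ =>
    obtain ⟨rfl, rfl⟩ := Prod.mk.inj (Multiset.singleton_inj.1 hM)
    simp_all [PlaceTr]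

theorem PlaceTr.tr (h : PlaceTr env ρ p σ m) : Tr env {(p, ρ)} σ m := by
  cases p with
  | pref mu t =>
    obtain ⟨rfl, rfl⟩ := h
    exact .pref ρ mu t
  | spref a s =>
    obtain ⟨σ', rfl, h⟩ := h
    exact .spref ρ a s σ' m h
  | sum s1 s2 => exact h.elim (.sum1 ρ s1 s2 σ m) (.sum2 ρ s1 s2 σ m)
  | const c => exact .cons ρ c σ m h
  | nil | var | par _ _ | res _ _ => exact h.elim

theorem tr_singleton_iff : Tr env {(p, ρ)} σ m ↔ PlaceTr env ρ p σ m := ⟨Tr.placeTr, PlaceTr.tr⟩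

theorem tr_pref_iff : Tr env {(.pref mu p, ρ)} σ m ↔ σ = actL ρ mu ∧ m = dec ρ p :=
  tr_singleton_iff

theorem tr_spref_iff : Tr env {(.spref a p, ρ)} σ m ↔
    ∃ σ', σ = XAct.inp a (ρ a) :: σ' ∧ Tr env (dec ρ p) σ' m :=
  tr_singleton_iff

theorem tr_sum_iff : Tr env {(.sum p q, ρ)} σ m ↔ Tr env (dec ρ p) σ m ∨ Tr env (dec ρ q) σ m :=
  tr_singleton_iff

theorem not_tr_sum_nil_nil : ¬ Tr env {(.sum .nil .nil, ρ)} σ m := fun h =>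
  (tr_sum_iff.1 h).elim not_tr_zero not_tr_zero

theorem tr_spref_sum_iff : Tr env {(.spref a (.sum p q), ρ)} σ m ↔
    Tr env {(.sum (.spref a p) (.spref a q), ρ)} σ m := by
  simp only [tr_spref_iff, tr_sum_iff, dec, and_or_left, exists_or]

theorem tr_spref_tau_iff : Tr env {(.spref a (.pref .tau p), ρ)} σ m ↔
    Tr env {(.pref (.inp a) p, ρ)} σ m := by
  simp only [tr_spref_iff, tr_pref_iff, dec, actL, ← and_assoc, exists_and_right,
    exists_eq_right]

theorem NetTr.of_spref (h : NetTr env {(.spref a p, ρ)} σ m) :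
    ∃ σ', NetTr env (dec ρ p) σ' m := by
  obtain ⟨htr, hunres⟩ := h
  obtain ⟨σ', rfl, htr'⟩ := tr_spref_iff.1 htr
  exact ⟨σ', htr', fun x hx => hunres x (List.mem_cons_of_mem _ hx)⟩

end Transitions

section Linkings

variable {α κ : Type}

/-- The identity linkings, which link only equal places. -/
def identityLinkings (α κ : Type) : Set (Multiset (Place α κ × Place α κ)) :=
  {l | ∀ z ∈ l, z.1 = z.2}

/-- The identity linking with both projections equal to the marking `m`. -/
def diagLinking (m : Multiset (Place α κ)) : Multiset (Place α κ × Place α κ) :=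
  m.map fun s => (s, s)

theorem pi1_diagLinking (m : Multiset (Place α κ)) : pi1 (diagLinking m) = m := by
  simp [pi1, diagLinking]

theorem pi2_diagLinking (m : Multiset (Place α κ)) : pi2 (diagLinking m) = m := by
  simp [pi2, diagLinking]

theorem diagLinking_mem_identityLinkings (m : Multiset (Place α κ)) :
    diagLinking m ∈ identityLinkings α κ :=
  Multiset.forall_mem_map_iff.2 fun _ _ => rfl

variable {l c : Multiset (Place α κ × Place α κ)}

theorem pi1_eq_pi2_of_mem_identityLinkings (hl : l ∈ identityLinkings α κ) : pi1 l = pi2 l :=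
  Multiset.map_congr rfl hl

theorem mem_identityLinkings_of_le (hcl : c ≤ l) (hl : l ∈ identityLinkings α κ) :
    c ∈ identityLinkings α κ :=
  fun z hz => hl z (Multiset.mem_of_le hcl hz)

theorem add_mem_identityLinkings (hl : l ∈ identityLinkings α κ)
    (hc : c ∈ identityLinkings α κ) : l + c ∈ identityLinkings α κ :=
  fun z hz => (Multiset.mem_add.1 hz).elim (hl z) (hc z)

end Linkings

section Bisimilarity

variable {α κ : Type} [DecidableEq α] [DecidableEq κ] [Fintype α] {env : κ → FNM α κ}

theorem isSPB_of_netTr_iff {R : Set (Multiset (Place α κ × Place α κ))}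
    (hiff : ∀ l ∈ R, ∀ c ≤ l, ∀ σ m, NetTr env (pi1 c) σ m ↔ NetTr env (pi2 c) σ m)
    (hdiag : ∀ l ∈ R, ∀ c ≤ l, ∀ σ m, NetTr env (pi1 c) σ m → l - c + diagLinking m ∈ R) :
    IsSPB env R := by
  refine fun l hl c hc => ⟨fun σ m h => ?_, fun σ m h => ?_⟩
  · exact ⟨m, diagLinking m, (hiff l hl c hc σ m).1 h, pi1_diagLinking m, pi2_diagLinking m,
      hdiag l hl c hc σ m h⟩
  · have h' := (hiff l hl c hc σ m).2 h
    exact ⟨m, diagLinking m, h', pi1_diagLinking m, pi2_diagLinking m, hdiag l hl c hc σ m h'⟩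

theorem isSPB_insert_identityLinkings {x y : Place α κ}
    (hxy : ∀ σ m, NetTr env {x} σ m ↔ NetTr env {y} σ m) :
    IsSPB env (insert {(x, y)} (identityLinkings α κ)) := by
  apply isSPB_of_netTr_iff
  · rintro l (rfl | hl) c hc σ m
    · rcases Multiset.le_singleton.1 hc with rfl | rfl
      · exact Iff.rfl
      · exact hxy σ m
    · rw [pi1_eq_pi2_of_mem_identityLinkings (mem_identityLinkings_of_le hc hl)]
  · intro l hl c hc σ m h
    suffices l - c ∈ identityLinkings α κ from
      Or.inr (add_mem_identityLinkings this (diagLinking_mem_identityLinkings m))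
    rcases hl with rfl | hl
    · rcases Multiset.le_singleton.1 hc with rfl | rfl
      · exact (not_tr_zero h.1).elim
      · simp [identityLinkings]
    · exact mem_identityLinkings_of_le (Multiset.sub_le_self _ _) hl

variable {a : α} {p q : FNM α κ} {x y : Place α κ}

theorem SPEq.of_netTr_iff (hp : dec (fun _ => false) p = {x}) (hq : dec (fun _ => false) q = {y})
    (hxy : ∀ σ m, NetTr env {x} σ m ↔ NetTr env {y} σ m) : SPEq env p q :=
  ⟨_, isSPB_insert_identityLinkings hxy, {(x, y)}, Set.mem_insert _ _, hp.symm, hq.symm⟩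

theorem SPEq.exists_netTr {σ : Lbl α} {m : Multiset (Place α κ)} (h : SPEq env p q)
    (hm : NetTr env (dec (fun _ => false) p) σ m) :
    ∃ m', NetTr env (dec (fun _ => false) q) σ m' := by
  obtain ⟨R, hR, l, hl, h1, h2⟩ := h
  rw [← h1] at hm
  obtain ⟨m', _, hm', -⟩ := (hR l hl l le_rfl).1 σ m hm
  exact ⟨m', h2 ▸ hm'⟩

theorem SPEq.not_netTr_of_sum_nil_nil {σ : Lbl α} {m : Multiset (Place α κ)}
    (h : SPEq env p (.sum .nil .nil)) : ¬ NetTr env (dec (fun _ => false) p) σ m := fun hm =>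
  let ⟨_, hm'⟩ := h.exists_netTr hm
  not_tr_sum_nil_nil hm'.1

theorem speq_spref_sum (env : κ → FNM α κ) (a : α) (p q : FNM α κ) :
    SPEq env (.spref a (.sum p q)) (.sum (.spref a p) (.spref a q)) :=
  .of_netTr_iff rfl rfl fun _ _ => and_congr_left' tr_spref_sum_iff

theorem speq_spref_tau (env : κ → FNM α κ) (a : α) (p : FNM α κ) :
    SPEq env (.spref a (.pref .tau p)) (.pref (.inp a) p) :=
  .of_netTr_iff rfl rfl fun _ _ => and_congr_left' tr_spref_tau_iff

theorem speq_spref_of_not_netTr (h : ∀ σ m, ¬ NetTr env (dec (fun _ => false) p) σ m) :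
    SPEq env (.spref a p) (.sum .nil .nil) :=
  .of_netTr_iff rfl rfl fun _ m =>
    iff_of_false (fun ht => let ⟨σ', ht'⟩ := ht.of_spref; h σ' m ht')
      fun ht => not_tr_sum_nil_nil ht.1

end Bisimilarity

end FNM

open FNM in
theorem speq_strong_prefix_laws_general {α κ : Type} [DecidableEq α] [DecidableEq κ]
    [Fintype α] (env : κ → FNM α κ) (a : α) (p q : FNM α κ) :
    SPEq env (.spref a (.sum p q)) (.sum (.spref a p) (.spref a q)) ∧
    SPEq env (.spref a (.pref .tau p)) (.pref (.inp a) p) ∧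
    ((p = .nil ∨ SPEq env p (.sum .nil .nil)) → SPEq env (.spref a p) (.sum .nil .nil)) := by
  refine ⟨speq_spref_sum env a p q, speq_spref_tau env a p, ?_⟩
  rintro (rfl | h)
  · exact speq_spref_of_not_netTr fun _ _ ht => not_tr_zero ht.1
  · exact speq_spref_of_not_netTr fun _ _ => h.not_netTr_of_sum_nil_nil

open FNM in
/-- laws of the strong prefixing operator, up to
structure-preserving bisimilarity: distribution
`a̲.(p + q) ~sp a̲.p + a̲.q`, absorption `a̲.τ.p ~sp a.p`, and annihilation
(if `p ~sp 0 + 0` or `p = 0` then `a̲.p ~sp 0 + 0`), for all FNM guarded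
processes `p, q` and every input action `a`. -/
theorem speq_strong_prefix_laws {α κ : Type} [DecidableEq α] [DecidableEq κ]
    [Fintype α] [Finite κ]
    (env : κ → FNM α κ) (henv : ∀ c, Grd (env c) ∧ VarFree (env c))
    (a : α) (p q : FNM α κ) (hp : Grd p) (hq : Grd q)
    (hpv : VarFree p) (hqv : VarFree q) :
    SPEq env (FNM.spref a (FNM.sum p q))
      (FNM.sum (FNM.spref a p) (FNM.spref a q)) ∧
    SPEq env (FNM.spref a (FNM.pref Act.tau p)) (FNM.pref (Act.inp a) p) ∧
    ((p = FNM.nil ∨ SPEq env p (FNM.sum FNM.nil FNM.nil)) →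
      SPEq env (FNM.spref a p) (FNM.sum FNM.nil FNM.nil)) :=
  speq_strong_prefix_laws_general env a p q
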